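/- Let P ∈ ℂ[X] be a monic polynomial with distinct roots, all nonzero, and let k be a natural number. Let W = (ℂ[X]/(P)) ⊗ ℂ^{k+1}, with T_W = (multiplication by X) ⊗ id and N_W = id ⊗ (the shift e_i ↦ e_{i-1}, e₀ ↦ 0). Let V be a finite-dimensional complex vector space with two commuting endomorphisms: S diagonalizable and invertible, and N nilpotent with N^{k+1} = 0. Then the linear map V ⊗ W → V sending v ⊗ (Q ⊗ e_i) to Σ_{α : P(α)=0} Q(α) · v if i = 0 and to 0 if i > 0, restricts to an isomorphism from Ker(S ⊗ T_W - id) ∩ Ker(N ⊗ id_W + id_V ⊗ N_W) onto the (internal direct) sum ⊕_{α : P(α)=0} Ker(S - α^{-1}·id_V). -/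

import Mathlib

/-!
In coordinates the tensor product `V ⊗ (ℂ[X]/(P) ⊗ ℂ^{k+1})` is a family of copies of `V` indexed by
the pairs `(α, i)`, with `α` a root of `P` and `0 ≤ i ≤ k`: the coordinate `nearbyCoord` at `(α, i)`
sends `v ⊗ (Q ⊗ x)` to `(Q(α) xᵢ) v`.  Since `P` is split with distinct roots, the classes of the
Lagrange basis polynomials at the roots are the idempotents dual to evaluation, and every tensor is
recovered from its coordinates (`eq_sum_nearbyCoord`).

Writing `c α i` for the coordinates of a tensor, the first operator kills it iff
`α • S (c α i) = c α i`, that is, `c α i` lies in the `α⁻¹`-eigenspace of `S`; the second kills it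
iff `c α (i + 1) = -N (c α i)`, with `c α (k + 1) = 0`.  A tensor in both kernels is therefore
determined by the vectors `c α 0`, by `c α i = (-N)^i (c α 0)`.  Conversely, any choice of `c α 0`
in the eigenspaces occurs: `N` preserves them because it commutes with `S`, and the last
condition holds because `N^{k+1} = 0`.  The projection is `∑ α, c α 0`; it is injective on the
kernel since eigenspaces for distinct eigenvalues are independent, and its image is their sum.
-/

open Polynomial TensorProduct

/-- The standard `(k+1)`-dimensional complex coordinate space `ℂ^{k+1}`. -/
def CVec (k : ℕ) : Type := Fin (k + 1) → ℂ

noncomputable instance (k : ℕ) : AddCommGroup (CVec k) := Pi.addCommGroup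
noncomputable instance (k : ℕ) : Module ℂ (CVec k) := Pi.module _ _ _

/-- The standard basis vector `e_i` of `ℂ^{k+1}`. -/
noncomputable def eVec (k : ℕ) (i : Fin (k + 1)) : CVec k := Pi.single i 1

/-- Multiplication by (the class of) `X` on the quotient ring `ℂ[X]/(P)`. -/
noncomputable def mulXmod (P : ℂ[X]) : Module.End ℂ (ℂ[X] ⧸ Ideal.span {P}) :=
  LinearMap.mulLeft ℂ (Ideal.Quotient.mk (Ideal.span {P}) Polynomial.X)

/-- The shift endomorphism of `ℂ^{k+1}` (one nilpotent Jordan block):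
`e_i ↦ e_{i-1}` for `i ≥ 1` and `e₀ ↦ 0`. -/
noncomputable def jordanShift (k : ℕ) : Module.End ℂ (CVec k) :=
  Matrix.toLin' (Matrix.of fun i j : Fin (k + 1) => if (i : ℕ) + 1 = (j : ℕ) then 1 else 0)

/-- The operator `S ⊗ T_W - id` on `V ⊗ W`, `W = (ℂ[X]/(P)) ⊗ ℂ^{k+1}`,
where `T_W = m_X ⊗ id`. -/
noncomputable def monodromyOp {V : Type*} [AddCommGroup V] [Module ℂ V]
    (P : ℂ[X]) (k : ℕ) (S : Module.End ℂ V) :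
    Module.End ℂ (TensorProduct ℂ V
      (TensorProduct ℂ (ℂ[X] ⧸ Ideal.span {P}) (CVec k))) :=
  TensorProduct.map S (TensorProduct.map (mulXmod P) LinearMap.id) - LinearMap.id

/-- The operator `N ⊗ id + id ⊗ N_W` on `V ⊗ W`, `W = (ℂ[X]/(P)) ⊗ ℂ^{k+1}`,
where `N_W = id ⊗ shift`. -/
noncomputable def logMonodromyOp {V : Type*} [AddCommGroup V] [Module ℂ V]
    (P : ℂ[X]) (k : ℕ) (N : Module.End ℂ V) :
    Module.End ℂ (TensorProduct ℂ V
      (TensorProduct ℂ (ℂ[X] ⧸ Ideal.span {P}) (CVec k))) :=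
  LinearMap.rTensor (TensorProduct ℂ (ℂ[X] ⧸ Ideal.span {P}) (CVec k)) N +
    LinearMap.lTensor V (LinearMap.lTensor (ℂ[X] ⧸ Ideal.span {P}) (jordanShift k))

/-! ### Coordinates on the Jordan block -/

/-- The `i`-th coordinate functional on `ℂ^{k+1}`.  The index ranges over `ℕ`, and the functional is
`0` for `i > k`, so that the shift satisfies `xᵢ ∘ shift = xᵢ₊₁` without exception. -/
noncomputable def cCoord (k i : ℕ) : CVec k →ₗ[ℂ] ℂ where
  toFun x := if h : i < k + 1 then x ⟨i, h⟩ else 0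
  map_add' x y := by
    split_ifs
    · rfl
    · simp
  map_smul' c x := by
    split_ifs
    · rfl
    · simp

lemma cCoord_of_lt {k i : ℕ} (h : i < k + 1) (x : CVec k) : cCoord k i x = x ⟨i, h⟩ :=
  dif_pos h

lemma cCoord_of_ge {k i : ℕ} (h : ¬ i < k + 1) : cCoord k i = 0 :=
  LinearMap.ext fun _ => dif_neg h

lemma cCoord_eVec (k i : ℕ) (j : Fin (k + 1)) :
    cCoord k i (eVec k j) = if i = (j : ℕ) then 1 else 0 := by
  by_cases h : i < k + 1
  · rw [cCoord_of_lt h]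
    simp [eVec, Pi.single_apply, Fin.ext_iff]
  · rw [cCoord_of_ge h, if_neg (by omega)]
    rfl

lemma cCoord_jordanShift (k i : ℕ) (x : CVec k) :
    cCoord k i (jordanShift k x) = cCoord k (i + 1) x := by
  by_cases h : i < k + 1
  · rw [cCoord_of_lt h]
    have e : (jordanShift k x) ⟨i, h⟩
        = ∑ j : Fin (k + 1), (if i + 1 = (j : ℕ) then 1 else 0) * x j := rfl
    rw [e]
    by_cases h' : i + 1 < k + 1
    · rw [cCoord_of_lt h', Finset.sum_eq_single ⟨i + 1, h'⟩]
      · simp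
      · intro j _ hj
        rw [if_neg, zero_mul]
        intro h2
        exact hj (Fin.ext h2.symm)
      · simp
    · rw [cCoord_of_ge h']
      refine Finset.sum_eq_zero fun j _ => ?_
      rw [if_neg (by omega), zero_mul]
  · rw [cCoord_of_ge h, cCoord_of_ge (by omega)]
    rfl

lemma eq_sum_eVec {k : ℕ} (x : CVec k) :
    x = ∑ i : Fin (k + 1), cCoord k i x • eVec k i := by
  have h : ∀ i : Fin (k + 1), cCoord k i x = x i := fun i => cCoord_of_lt i.2 x
  simp_rw [h]
  exact pi_eq_sum_univ' (R := ℂ) (ι := Fin (k + 1)) x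

/-! ### Evaluations and idempotents on `ℂ[X]/(P)` -/

/-- Evaluation at a root `α` of `P`, as a linear functional on `ℂ[X]/(P)`. -/
noncomputable def evalMod (P : ℂ[X]) (α : P.roots.toFinset) :
    (ℂ[X] ⧸ Ideal.span {P}) →ₐ[ℂ] ℂ :=
  Ideal.Quotient.liftₐ (Ideal.span {P}) (aeval (α : ℂ)) (by
    intro a ha
    obtain ⟨b, rfl⟩ := Ideal.mem_span_singleton.1 ha
    have := isRoot_of_mem_roots (Multiset.mem_toFinset.1 α.2)
    simp [coe_aeval_eq_eval, this.eq_zero])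

@[simp] lemma evalMod_mk (P : ℂ[X]) (α : P.roots.toFinset) (Q : ℂ[X]) :
    evalMod P α (Ideal.Quotient.mk (Ideal.span {P}) Q) = Q.eval (α : ℂ) := by
  change aeval (α : ℂ) Q = _
  simp [coe_aeval_eq_eval]

/-- The idempotent of `ℂ[X]/(P)` attached to a root `α`: the class of the Lagrange basis
polynomial, equal to `1` at `α` and to `0` at the other roots. -/
noncomputable def rootIdem (P : ℂ[X]) (α : P.roots.toFinset) : ℂ[X] ⧸ Ideal.span {P} :=
  Ideal.Quotient.mk (Ideal.span {P}) (Lagrange.basis P.roots.toFinset id (α : ℂ))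

lemma evalMod_rootIdem (P : ℂ[X]) (α β : P.roots.toFinset) :
    evalMod P α (rootIdem P β) = if α = β then 1 else 0 := by
  rw [rootIdem, evalMod_mk]
  split_ifs with h
  · subst h
    exact Lagrange.eval_basis_self (v := id) Function.injective_id.injOn α.2
  · exact Lagrange.eval_basis_of_ne (v := id) (fun h' => h (Subtype.ext h'.symm)) α.2

/-- Lagrange interpolation modulo `P`: the difference of the two sides vanishes at all roots of
`P`, which is split with distinct roots, hence is divisible by `P`. -/
lemma eq_sum_rootIdem {P : ℂ[X]} (hP : P ≠ 0) (hroots : P.roots.Nodup)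
    (q : ℂ[X] ⧸ Ideal.span {P}) :
    q = ∑ α : P.roots.toFinset, evalMod P α q • rootIdem P α := by
  -- A polynomial whose class is killed by all evaluations is divisible by `P`.
  have key : ∀ q : ℂ[X] ⧸ Ideal.span {P}, (∀ α, evalMod P α q = 0) → q = 0 := by
    intro q hq
    obtain ⟨Q, rfl⟩ := Ideal.Quotient.mk_surjective q
    rw [Ideal.Quotient.eq_zero_iff_mem, Ideal.mem_span_singleton]
    by_cases hQ : Q = 0
    · simp [hQ]
    · rw [IsAlgClosed.dvd_iff_roots_le_roots hP hQ, Multiset.le_iff_subset hroots]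
      intro a ha
      have := hq ⟨a, Multiset.mem_toFinset.2 ha⟩
      rw [evalMod_mk] at this
      exact (mem_roots hQ).2 this
  rw [← sub_eq_zero]
  refine key _ fun β => ?_
  simp [evalMod_rootIdem]

/-! ### Coordinates on the triple tensor product -/

section

variable {V : Type*} [AddCommGroup V] [Module ℂ V]

/-- The coordinate of `V ⊗ (ℂ[X]/(P) ⊗ ℂ^{k+1})` at the root `α` and the index `i`:
`v ⊗ (Q ⊗ x) ↦ (Q(α) xᵢ) • v`. -/
noncomputable def nearbyCoord (V : Type*) [AddCommGroup V] [Module ℂ V] (P : ℂ[X]) (k : ℕ)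
    (α : P.roots.toFinset) (i : ℕ) :
    TensorProduct ℂ V (TensorProduct ℂ (ℂ[X] ⧸ Ideal.span {P}) (CVec k)) →ₗ[ℂ] V :=
  (TensorProduct.rid ℂ V).toLinearMap ∘ₗ LinearMap.lTensor V
    ((TensorProduct.lid ℂ ℂ).toLinearMap ∘ₗ
      TensorProduct.map (evalMod P α).toLinearMap (cCoord k i))

@[simp] lemma nearbyCoord_tmul (P : ℂ[X]) (k : ℕ) (α : P.roots.toFinset) (i : ℕ) (v : V)
    (q : ℂ[X] ⧸ Ideal.span {P}) (x : CVec k) :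
    nearbyCoord V P k α i (v ⊗ₜ[ℂ] (q ⊗ₜ[ℂ] x)) = (evalMod P α q * cCoord k i x) • v := by
  simp [nearbyCoord]

/-- Two linear maps on `V ⊗ (A ⊗ C)` agree once they agree on the tensors `v ⊗ (q ⊗ x)`. -/
lemma hom_ext_tmul {A C M : Type*} [AddCommGroup A] [Module ℂ A] [AddCommGroup C] [Module ℂ C]
    [AddCommGroup M] [Module ℂ M] {f g : TensorProduct ℂ V (TensorProduct ℂ A C) →ₗ[ℂ] M}
    (h : ∀ v q x, f (v ⊗ₜ[ℂ] (q ⊗ₜ[ℂ] x)) = g (v ⊗ₜ[ℂ] (q ⊗ₜ[ℂ] x))) : f = g := by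
  refine TensorProduct.ext (LinearMap.ext fun v => TensorProduct.ext' fun q x => ?_)
  exact h v q x

lemma nearbyCoord_of_ge {P : ℂ[X]} {k : ℕ} (α : P.roots.toFinset) {i : ℕ} (h : ¬ i < k + 1) :
    nearbyCoord V P k α i = 0 := by
  refine hom_ext_tmul fun v q x => ?_
  simp [cCoord_of_ge h]

/-- Every tensor is recovered from its coordinates. -/
lemma eq_sum_nearbyCoord {P : ℂ[X]} (hP : P ≠ 0) (hroots : P.roots.Nodup) {k : ℕ}
    (z : TensorProduct ℂ V (TensorProduct ℂ (ℂ[X] ⧸ Ideal.span {P}) (CVec k))) :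
    z = ∑ α : P.roots.toFinset, ∑ i : Fin (k + 1),
      nearbyCoord V P k α i z ⊗ₜ[ℂ] (rootIdem P α ⊗ₜ[ℂ] eVec k i) := by
  have h : LinearMap.id = ∑ α : P.roots.toFinset, ∑ i : Fin (k + 1),
      (TensorProduct.mk ℂ V _).flip (rootIdem P α ⊗ₜ[ℂ] eVec k i) ∘ₗ nearbyCoord V P k α i := by
    refine hom_ext_tmul fun v q x => ?_
    conv_lhs => rw [eq_sum_rootIdem hP hroots q, eq_sum_eVec x]
    simp only [LinearMap.id_apply, TensorProduct.sum_tmul, TensorProduct.tmul_sum,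
      LinearMap.sum_apply, LinearMap.comp_apply, LinearMap.flip_apply, TensorProduct.mk_apply,
      nearbyCoord_tmul, TensorProduct.smul_tmul, TensorProduct.tmul_smul, Finset.smul_sum,
      smul_smul]
    rw [Finset.sum_comm]
    simp only [mul_comm]
  have := LinearMap.congr_fun h z
  simpa using this

lemma eq_zero_of_nearbyCoord {P : ℂ[X]} (hP : P ≠ 0) (hroots : P.roots.Nodup) {k : ℕ}
    {z : TensorProduct ℂ V (TensorProduct ℂ (ℂ[X] ⧸ Ideal.span {P}) (CVec k))}
    (h : ∀ α, ∀ i < k + 1, nearbyCoord V P k α i z = 0) : z = 0 := by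
  rw [eq_sum_nearbyCoord hP hroots z]
  refine Finset.sum_eq_zero fun α _ => Finset.sum_eq_zero fun i _ => ?_
  rw [h α i i.2, TensorProduct.zero_tmul]

lemma nearbyCoord_monodromyOp (P : ℂ[X]) (k : ℕ) (S : Module.End ℂ V) (α : P.roots.toFinset)
    (i : ℕ) (z) :
    nearbyCoord V P k α i (monodromyOp P k S z)
      = (α : ℂ) • S (nearbyCoord V P k α i z) - nearbyCoord V P k α i z := by
  have h : nearbyCoord V P k α i ∘ₗ monodromyOp P k S
      = (α : ℂ) • S ∘ₗ nearbyCoord V P k α i - nearbyCoord V P k α i := by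
    refine hom_ext_tmul fun v q x => ?_
    simp [monodromyOp, mulXmod, smul_smul, mul_assoc]
  exact LinearMap.congr_fun h z

lemma nearbyCoord_logMonodromyOp (P : ℂ[X]) (k : ℕ) (N : Module.End ℂ V)
    (α : P.roots.toFinset) (i : ℕ) (z) :
    nearbyCoord V P k α i (logMonodromyOp P k N z)
      = N (nearbyCoord V P k α i z) + nearbyCoord V P k α (i + 1) z := by
  have h : nearbyCoord V P k α i ∘ₗ logMonodromyOp P k N
      = N ∘ₗ nearbyCoord V P k α i + nearbyCoord V P k α (i + 1) := by
    refine hom_ext_tmul fun v q x => ?_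
    simp [logMonodromyOp, cCoord_jordanShift]
  exact LinearMap.congr_fun h z

/-- The tensor with coordinates `(-N)^i u` at `(α, i)` and `0` at the other roots. -/
noncomputable def nearbyLift (P : ℂ[X]) (k : ℕ) (N : Module.End ℂ V) (α : P.roots.toFinset)
    (u : V) : TensorProduct ℂ V (TensorProduct ℂ (ℂ[X] ⧸ Ideal.span {P}) (CVec k)) :=
  ∑ i : Fin (k + 1), ((-N) ^ (i : ℕ)) u ⊗ₜ[ℂ] (rootIdem P α ⊗ₜ[ℂ] eVec k i)

/-- The formula also holds for `i > k`, where both sides vanish because `N ^ (k + 1) = 0`. -/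
lemma nearbyCoord_nearbyLift {P : ℂ[X]} {k : ℕ} {N : Module.End ℂ V} (hN : N ^ (k + 1) = 0)
    (α β : P.roots.toFinset) (u : V) (i : ℕ) :
    nearbyCoord V P k β i (nearbyLift P k N α u) = if β = α then ((-N) ^ i) u else 0 := by
  by_cases h : i < k + 1
  · rw [nearbyLift, map_sum, Finset.sum_eq_single ⟨i, h⟩]
    · rw [nearbyCoord_tmul, evalMod_rootIdem, cCoord_eVec]
      split_ifs <;> simp_all
    · intro j _ hj
      rw [nearbyCoord_tmul, cCoord_eVec, if_neg, mul_zero, zero_smul]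
      intro h2
      exact hj (Fin.ext h2.symm)
    · simp
  · have h0 : (-N) ^ i = 0 := by
      refine pow_eq_zero_of_le (not_lt.1 h) ?_
      rw [neg_pow, hN, mul_zero]
    rw [nearbyCoord_of_ge β h, h0]
    simp

end

/-! ### The kernel and its projection -/

/-- **The linear-algebra content of the isomorphism (3.8).**
Let `P ∈ ℂ[X]` be monic with distinct, nonzero roots, `k ∈ ℕ`, and let
`W = ℂ[X]/(P) ⊗ ℂ^{k+1}` with `T_W = m_X ⊗ id` and `N_W = id ⊗ shift`.  Let `V` be a
finite-dimensional complex vector space with commuting endomorphisms `S`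
(diagonalizable and invertible) and `N` (with `N^{k+1} = 0`).  The map `V ⊗ W → V`,
`v ⊗ (Q ⊗ e_i) ↦ (Σ_{P(α)=0} Q(α)) • v` if `i = 0` and `0` otherwise, restricts to an
isomorphism of `Ker(S ⊗ T_W - id) ∩ Ker(N ⊗ id + id ⊗ N_W)` onto
`⊕_{P(α)=0} Ker (S - α⁻¹·id)`. -/
theorem ker_nearby_cycle_tensor {V : Type*} [AddCommGroup V] [Module ℂ V]
    [FiniteDimensional ℂ V] (P : ℂ[X]) (hmonic : P.Monic) (hroots : P.roots.Nodup)
    (h0 : P.eval 0 ≠ 0) (k : ℕ) (S N : Module.End ℂ V) (hSN : Commute S N)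
    (hdiag : (⨆ μ : ℂ, Module.End.eigenspace S μ) = ⊤) (hS : IsUnit S)
    (hN : N ^ (k + 1) = 0) :
    ∃ Φ : TensorProduct ℂ V
        (TensorProduct ℂ (ℂ[X] ⧸ Ideal.span {P}) (CVec k)) →ₗ[ℂ] V,
      (∀ (v : V) (Q : ℂ[X]) (i : Fin (k + 1)),
          Φ (v ⊗ₜ[ℂ] (Ideal.Quotient.mk (Ideal.span {P}) Q ⊗ₜ[ℂ] eVec k i)) =
            if i = 0 then (∑ α ∈ P.roots.toFinset, Q.eval α) • v else 0) ∧
      Set.InjOn (⇑Φ)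
        ((LinearMap.ker (monodromyOp P k S) ⊓ LinearMap.ker (logMonodromyOp P k N) :
            Submodule ℂ _) : Set _) ∧
      Submodule.map Φ
          (LinearMap.ker (monodromyOp P k S) ⊓ LinearMap.ker (logMonodromyOp P k N)) =
        ⨆ α ∈ P.roots.toFinset,
          LinearMap.ker (S - (α⁻¹ : ℂ) • (1 : Module.End ℂ V)) := by
  have hP : P ≠ 0 := hmonic.ne_zero
  have hα0 : ∀ α : P.roots.toFinset, (α : ℂ) ≠ 0 := by
    intro α h
    have := isRoot_of_mem_roots (Multiset.mem_toFinset.1 α.2)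
    rw [h] at this
    exact h0 this
  have hker : ∀ (c : ℂ) (v : V),
      v ∈ LinearMap.ker (S - c • (1 : Module.End ℂ V)) ↔ S v = c • v := by
    intro c v
    simp [LinearMap.mem_ker, sub_eq_zero]
  have heig : ∀ z ∈ LinearMap.ker (monodromyOp P k S), ∀ (α : P.roots.toFinset) (i : ℕ),
      S (nearbyCoord V P k α i z) = (α : ℂ)⁻¹ • nearbyCoord V P k α i z := by
    intro z hz α i
    have h := nearbyCoord_monodromyOp P k S α i z
    rw [LinearMap.mem_ker.1 hz, map_zero, eq_comm, sub_eq_zero] at h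
    rw [eq_inv_smul_iff₀ (hα0 α), h]
  refine ⟨∑ α : P.roots.toFinset, nearbyCoord V P k α 0, ?_, ?_, ?_⟩
  · intro v Q i
    rw [← Finset.sum_coe_sort P.roots.toFinset (fun α => Q.eval α), Finset.sum_smul]
    simp only [LinearMap.sum_apply, nearbyCoord_tmul, evalMod_mk, cCoord_eVec]
    by_cases hi : i = 0
    · simp [hi]
    · have : ¬ (0 = (i : ℕ)) := fun h => hi (Fin.ext h.symm)
      simp [hi, this]
  · intro z hz w hw hzw
    rw [← sub_eq_zero]
    have hd := Submodule.sub_mem _ hz hw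
    have hΦ := sub_eq_zero.2 hzw
    rw [← map_sub, LinearMap.sum_apply] at hΦ
    generalize z - w = y at hd hΦ ⊢
    obtain ⟨hy1, hy2⟩ := hd
    -- The summands of `Φ y = 0` lie in eigenspaces of `S` for distinct eigenvalues.
    have hzero : ∀ α : P.roots.toFinset, nearbyCoord V P k α 0 y = 0 := by
      have hind : iSupIndep fun α : P.roots.toFinset => S.eigenspace (α : ℂ)⁻¹ :=
        S.eigenspaces_iSupIndep.comp (inv_injective.comp Subtype.val_injective)
      intro α
      exact (iSupIndep_iff_finsetSum_eq_zero_imp_eq_zero _).1 hind Finset.univ _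
        (fun β _ => Module.End.mem_eigenspace_iff.2 (heig y hy1 β 0)) hΦ α (Finset.mem_univ α)
    refine eq_zero_of_nearbyCoord hP hroots fun α i _ => ?_
    induction i with
    | zero => exact hzero α
    | succ i ih =>
      have h := nearbyCoord_logMonodromyOp P k N α i y
      rw [LinearMap.mem_ker.1 hy2, ih (by omega), map_zero, map_zero, zero_add] at h
      exact h.symm
  · apply le_antisymm
    · rintro _ ⟨z, ⟨hz, -⟩, rfl⟩
      rw [LinearMap.sum_apply]
      refine Submodule.sum_mem _ fun α _ => ?_
      refine Submodule.mem_iSup_of_mem (α : ℂ) (Submodule.mem_iSup_of_mem α.2 ?_)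
      exact (hker _ _).2 (heig z hz α 0)
    · refine iSup₂_le fun a ha u hu => ?_
      obtain ⟨α, rfl⟩ : ∃ α : P.roots.toFinset, (α : ℂ) = a := ⟨⟨a, ha⟩, rfl⟩
      rw [hker] at hu
      -- `N` preserves the eigenspace, since it commutes with `S`.
      have hSpow : ∀ i : ℕ, S (((-N) ^ i) u) = (α : ℂ)⁻¹ • ((-N) ^ i) u := by
        intro i
        have hc : S * (-N) ^ i = (-N) ^ i * S := (hSN.neg_right.pow_right i).eq
        rw [← Module.End.mul_apply, hc, Module.End.mul_apply, hu, map_smul]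
      refine ⟨nearbyLift P k N α u, ⟨?_, ?_⟩, ?_⟩
      · refine LinearMap.mem_ker.2 (eq_zero_of_nearbyCoord hP hroots fun β i _ => ?_)
        rw [nearbyCoord_monodromyOp, nearbyCoord_nearbyLift hN]
        split_ifs with h
        · rw [h, hSpow, smul_inv_smul₀ (hα0 α), sub_self]
        · simp
      · refine LinearMap.mem_ker.2 (eq_zero_of_nearbyCoord hP hroots fun β i _ => ?_)
        rw [nearbyCoord_logMonodromyOp, nearbyCoord_nearbyLift hN, nearbyCoord_nearbyLift hN]
        split_ifs with h
        · rw [pow_succ', Module.End.mul_apply, LinearMap.neg_apply, add_neg_cancel]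
        · simp
      · rw [LinearMap.sum_apply, Finset.sum_eq_single α]
        · simp [nearbyCoord_nearbyLift hN]
        · intro β _ hβ
          rw [nearbyCoord_nearbyLift hN, if_neg hβ]
        · simp
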